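/- Lower bound for the bilevel representative-scenario program: let (U, v, w, x, (y ξ)_{ξ∈Ξ}) be any feasible point of the bilevel program, i.e., (x, w) is an optimal solution of the inner problem minimize c ⬝ᵥ x' + v ⬝ᵥ w' over pairs (x', w') satisfying A *ᵥ x' ≤ b, W *ᵥ w' ≤ v − U *ᵥ x', x' i an integer for every i ∈ I1, w' j an integer for every j ∈ I2, and y ξ ∈ Y(x, ξ) for every ξ ∈ Ξ. Then the outer objective satisfies c ⬝ᵥ x + Σ_{ξ∈Ξ} p ξ • (q ξ ⬝ᵥ y ξ) ≥ f*; moreover, if this outer objective equals f*, then x is an optimal first-stage decision of the 2SIP, i.e., Φ(x) ≤ Φ(x') for every x' ∈ X. -/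

import Mathlib

/-! Since `y ξ ∈ Y x ξ`, the value `q ξ ⬝ᵥ y ξ` bounds the infimum `Q x ξ` from above, so the outer
objective bounds `Φ x` from above by monotonicity of addition and of multiplication by `p ξ ≥ 0` in
`EReal`. Inner feasibility puts `x` in `X`, hence `f* ≤ Φ x ≤` outer objective, and equality of the
outer terms forces `Φ x ≤ f*`. -/

open Matrix

/-- Lower bound for the bilevel representative-scenario program: the outer
objective of any feasible point of the bilevel program is at least the 2SIP
optimal value, and if it equals it then the first-stage part is an optimal
first-stage decision of the 2SIP. -/
theorem bilevel_lower_bound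
    {n1 n2 m1 m2 : ℕ} {Ξ : Type*} [Fintype Ξ] [Nonempty Ξ]
    (c : Fin n1 → ℝ) (A : Matrix (Fin m1) (Fin n1) ℝ) (b : Fin m1 → ℝ)
    (W : Matrix (Fin m2) (Fin n2) ℝ)
    (I1 : Set (Fin n1)) (I2 : Set (Fin n2))
    (p : Ξ → ℝ) (hp : ∀ ξ, 0 < p ξ) (hpsum : ∑ ξ, p ξ = 1)
    (q : Ξ → Fin n2 → ℝ) (h : Ξ → Fin m2 → ℝ)
    (T : Ξ → Matrix (Fin m2) (Fin n1) ℝ)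
    -- first-stage feasible set
    (X : Set (Fin n1 → ℝ))
    (hX : X = {x | A *ᵥ x ≤ b ∧ ∀ i ∈ I1, ∃ z : ℤ, x i = (z : ℝ)})
    -- second-stage feasible sets
    (Y : (Fin n1 → ℝ) → Ξ → Set (Fin n2 → ℝ))
    (hY : ∀ x ξ, Y x ξ =
      {y | W *ᵥ y ≤ h ξ - T ξ *ᵥ x ∧ 0 ≤ y ∧ ∀ j ∈ I2, ∃ z : ℤ, y j = (z : ℝ)})
    -- recourse value (infimum in the extended reals)
    (Q : (Fin n1 → ℝ) → Ξ → EReal)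
    (hQ : ∀ x ξ, Q x ξ = ⨅ y ∈ Y x ξ, ((q ξ ⬝ᵥ y : ℝ) : EReal))
    -- objective value function
    (Φ : (Fin n1 → ℝ) → EReal)
    (hΦ : ∀ x, Φ x = ((c ⬝ᵥ x : ℝ) : EReal) + ∑ ξ, ((p ξ : ℝ) : EReal) * Q x ξ)
    -- 2SIP optimal value
    (fstar : EReal) (hf : fstar = ⨅ x ∈ X, Φ x)
    -- feasibility of the inner problem of the bilevel program
    (InnerFeas : Matrix (Fin m2) (Fin n1) ℝ → (Fin m2 → ℝ) →
      (Fin n1 → ℝ) → (Fin n2 → ℝ) → Prop)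
    (hInnerFeas : ∀ U v x' w', InnerFeas U v x' w' ↔
      (A *ᵥ x' ≤ b ∧ W *ᵥ w' ≤ v - U *ᵥ x' ∧
        (∀ i ∈ I1, ∃ z : ℤ, x' i = (z : ℝ)) ∧
        (∀ j ∈ I2, ∃ z : ℤ, w' j = (z : ℝ))))
    -- a feasible point (U, v, w, x, y) of the bilevel program; `qb` is the
    -- objective-coefficient vector of the inner problem (the `q̄`-component
    -- of the representative scenario; the paper's eq. (4) writes it as `v`,
    -- a dimensional typo since `v : Fin m2 → ℝ` while this coefficient must
    -- pair with the second-stage variable `w' : Fin n2 → ℝ`)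
    (U : Matrix (Fin m2) (Fin n1) ℝ) (v : Fin m2 → ℝ) (qb : Fin n2 → ℝ)
    (w : Fin n2 → ℝ)
    (x : Fin n1 → ℝ) (y : Ξ → (Fin n2 → ℝ))
    -- (x, w) is an optimal solution of the inner problem
    (hxw : InnerFeas U v x w)
    (hxwOpt : ∀ x' w', InnerFeas U v x' w' →
      c ⬝ᵥ x + qb ⬝ᵥ w ≤ c ⬝ᵥ x' + qb ⬝ᵥ w')
    -- the second-stage variables are feasible
    (hy : ∀ ξ : Ξ, y ξ ∈ Y x ξ) :
    fstar ≤ ((c ⬝ᵥ x : ℝ) : EReal) +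
        ∑ ξ, ((p ξ : ℝ) : EReal) * ((q ξ ⬝ᵥ y ξ : ℝ) : EReal) ∧
      (((c ⬝ᵥ x : ℝ) : EReal) +
          ∑ ξ, ((p ξ : ℝ) : EReal) * ((q ξ ⬝ᵥ y ξ : ℝ) : EReal) = fstar →
        ∀ x' ∈ X, Φ x ≤ Φ x') := by
  have hΦx : Φ x ≤ ((c ⬝ᵥ x : ℝ) : EReal) +
      ∑ ξ, ((p ξ : ℝ) : EReal) * ((q ξ ⬝ᵥ y ξ : ℝ) : EReal) := by
    rw [hΦ]
    refine add_le_add le_rfl (Finset.sum_le_sum fun ξ _ => ?_)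
    refine mul_le_mul_of_nonneg_left ?_ (EReal.coe_nonneg.2 (hp ξ).le)
    rw [hQ]
    exact iInf₂_le (y ξ) (hy ξ)
  have hxX : x ∈ X := by
    obtain ⟨hA, -, hI, -⟩ := (hInnerFeas U v x w).1 hxw
    rw [hX]
    exact ⟨hA, hI⟩
  have hle : ∀ x' ∈ X, fstar ≤ Φ x' := fun x' hx' => hf ▸ iInf₂_le x' hx'
  exact ⟨(hle x hxX).trans hΦx, fun heq x' hx' => (hΦx.trans heq.le).trans (hle x' hx')⟩
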